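/- Let X be an ∞-pseudo-metric space such that for every t > 0, X is a finite union of subsets of scale-t-dimension 0. If X is of scale-r-dimension 0 for some r > 0, then for each s > 0 there exist finitely many subsets X_0,…,X_p covering X that are pairwise scale-r-disjoint and each of scale-s-dimension 0. -/

import Mathlib

open Set
open scoped ENNReal

/-- `y` is joined to `x` by a scale-`r`-chain in `A`: a finite sequence of points of `A`
starting at `x` and ending at `y`, consecutive points of which have intersecting open
`r`-balls. -/
def ScaleChain {X : Type*} [PseudoEMetricSpace X] (r : ℝ) (A : Set X) (x y : X) : Prop :=
  ∃ n : ℕ, ∃ c : ℕ → X, (∀ i ≤ n, c i ∈ A) ∧ c 0 = x ∧ c n = y ∧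
    ∀ i < n,
      (EMetric.ball (c i) (ENNReal.ofReal r) ∩
        EMetric.ball (c (i + 1)) (ENNReal.ofReal r)).Nonempty

/-- The scale-`r`-component of `x` in `A`: all points of `A` joined to `x` by a
scale-`r`-chain in `A`. -/
def ScaleComponent {X : Type*} [PseudoEMetricSpace X] (r : ℝ) (A : Set X) (x : X) : Set X :=
  {y | ScaleChain r A x y}

/-- `A` has scale-`r`-dimension `0`: there is a finite bound on the diameters of all
scale-`r`-components of `A`. -/
def ScaleDimZero {X : Type*} [PseudoEMetricSpace X] (r : ℝ) (A : Set X) : Prop :=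
  ∃ M : ℝ≥0∞, M ≠ ⊤ ∧ ∀ x ∈ A, EMetric.diam (ScaleComponent r A x) ≤ M

/-- `C` and `D` are scale-`r`-disjoint: their open `r`-neighborhoods are disjoint. -/
def ScaleDisjoint {X : Type*} [PseudoEMetricSpace X] (r : ℝ) (C D : Set X) : Prop :=
  Metric.thickening r C ∩ Metric.thickening r D = ∅

/-- Two points are adjacent at scale `r` if their open `r`-balls intersect. -/
def ScaleAdj {X : Type*} [PseudoEMetricSpace X] (r : ℝ) (x y : X) : Prop :=
  (Metric.eball x (ENNReal.ofReal r) ∩ Metric.eball y (ENNReal.ofReal r)).Nonempty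

lemma ScaleAdj.symm {X : Type*} [PseudoEMetricSpace X] {r : ℝ} {x y : X}
    (h : ScaleAdj r x y) : ScaleAdj r y x := by
  unfold ScaleAdj at *
  rwa [inter_comm]

lemma ScaleAdj.edist_lt {X : Type*} [PseudoEMetricSpace X] {r : ℝ} {x y : X}
    (h : ScaleAdj r x y) : edist x y < ENNReal.ofReal r + ENNReal.ofReal r := by
  obtain ⟨z, hx, hy⟩ := h
  rw [Metric.mem_eball'] at hx
  rw [Metric.mem_eball] at hy
  exact (edist_triangle x z y).trans_lt (ENNReal.add_lt_add hx hy)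

lemma ScaleAdj.of_edist_lt {X : Type*} [PseudoEMetricSpace X] {r : ℝ} {x y : X}
    (h : edist x y < ENNReal.ofReal r) : ScaleAdj r x y :=
  ⟨x, Metric.mem_eball_self (pos_of_gt h), h⟩

lemma ScaleChain.refl {X : Type*} [PseudoEMetricSpace X] {r : ℝ} {A : Set X} {x : X}
    (hx : x ∈ A) : ScaleChain r A x x :=
  ⟨0, fun _ => x, fun _ _ => hx, rfl, rfl, fun _ hi => absurd hi (Nat.not_lt_zero _)⟩

lemma ScaleChain.snoc {X : Type*} [PseudoEMetricSpace X] {r : ℝ} {A : Set X} {x y z : X}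
    (h : ScaleChain r A x y) (hz : z ∈ A) (hyz : ScaleAdj r y z) : ScaleChain r A x z := by
  obtain ⟨n, c, hA, h0, hn, hc⟩ := h
  refine ⟨n + 1, fun i => if i ≤ n then c i else z, fun i _ => ?_, by simpa using h0, by simp,
    fun i hi => ?_⟩
  · by_cases hi : i ≤ n
    · simpa [hi] using hA i hi
    · simpa [hi] using hz
  · rcases (Nat.lt_succ_iff.1 hi).lt_or_eq with h | rfl
    · simpa [h.le, Nat.succ_le_of_lt h] using hc i h
    · simp only [le_refl, if_true, Nat.not_succ_le_self, if_false, hn]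
      exact hyz

lemma scaleChain_univ_of_reflTransGen {X : Type*} [PseudoEMetricSpace X] {r : ℝ} {x y : X}
    (h : Relation.ReflTransGen (ScaleAdj r) x y) : ScaleChain r univ x y := by
  induction h with
  | refl => exact .refl (mem_univ _)
  | tail _ hyz ih => exact ih.snoc (mem_univ _) hyz

/-- If the scale-`r`-components of `X` have diameter at most `M`, one can choose a point in each
of them, at distance at most `M` from all its points. -/
lemma exists_scaleComponent_representative {X : Type*} [PseudoEMetricSpace X] {r : ℝ} {M : ℝ≥0∞}
    (hM : ∀ x : X, Metric.ediam (ScaleComponent r univ x) ≤ M) :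
    ∃ o : X → X, (∀ x, edist x (o x) ≤ M) ∧ ∀ x y, ScaleAdj r x y → o x = o y := by
  let S : Setoid X := ⟨Relation.ReflTransGen (ScaleAdj r), fun _ => .refl,
    have : Std.Symm (ScaleAdj (X := X) r) := ⟨fun _ _ => ScaleAdj.symm⟩
    Relation.ReflTransGen.stdSymm.symm _ _, fun h h' => h.trans h'⟩
  refine ⟨fun x => (Quotient.mk S x).out, fun x => ?_, fun x y h => ?_⟩
  · have hx : Relation.ReflTransGen (ScaleAdj r) x (Quotient.mk S x).out :=
      S.symm (Quotient.mk_out (s := S) x)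
    exact (Metric.edist_le_ediam_of_mem (s := ScaleComponent r univ x)
      (ScaleChain.refl (mem_univ x)) (scaleChain_univ_of_reflTransGen hx)).trans (hM x)
  · exact congrArg Quotient.out (Quotient.sound (s := S) (.single h))

/-- If a map moves all points by at most `M`, then any set it sends into a set of
scale-`t`-dimension `0`, for `t` large compared with `s` and `M`, has scale-`s`-dimension `0`. -/
lemma ScaleDimZero.of_mapsTo {X : Type*} [PseudoEMetricSpace X] {s t : ℝ} {M : ℝ≥0∞}
    {A B : Set X} {o : X → X} (hB : ScaleDimZero t B) (hM : M ≠ ⊤)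
    (ho : ∀ x, edist x (o x) ≤ M) (hAB : MapsTo o A B)
    (ht : M + (ENNReal.ofReal s + ENNReal.ofReal s) + M ≤ ENNReal.ofReal t) :
    ScaleDimZero s A := by
  obtain ⟨N, hN, hBN⟩ := hB
  have hadj : ∀ x y, ScaleAdj s x y → ScaleAdj t (o x) (o y) := fun x y h => by
    refine .of_edist_lt (lt_of_lt_of_le ?_ ht)
    calc edist (o x) (o y) ≤ edist (o x) x + edist x y + edist y (o y) :=
          edist_triangle4 _ _ _ _
      _ ≤ M + edist x y + M := by
          gcongr
          · rw [edist_comm]; exact ho x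
          · exact ho y
      _ < _ := ENNReal.add_lt_add_of_lt_of_le hM
          (ENNReal.add_lt_add_left hM h.edist_lt) le_rfl
  have hmap : ∀ {x y}, ScaleChain s A x y → ScaleChain t B (o x) (o y) := by
    rintro x y ⟨n, c, hA, rfl, rfl, hc⟩
    exact ⟨n, o ∘ c, fun i hi => hAB (hA i hi), rfl, rfl, fun i hi => hadj _ _ (hc i hi)⟩
  refine ⟨M + N + M, by simp [hM, hN], fun x hx => Metric.ediam_le fun y hy z hz => ?_⟩
  calc edist y z ≤ edist y (o y) + edist (o y) (o z) + edist (o z) z :=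
        edist_triangle4 _ _ _ _
    _ ≤ M + N + M := by
        gcongr
        · exact ho y
        · exact (Metric.edist_le_ediam_of_mem (s := ScaleComponent t B (o x))
            (hmap hy) (hmap hz)).trans (hBN _ (hAB hx))
        · rw [edist_comm]; exact ho z

/-- Distinct fibres of a function that is constant on scale-`r`-adjacent points are
scale-`r`-disjoint. -/
lemma scaleDisjoint_preimage_singleton {X ι : Type*} [PseudoEMetricSpace X] {r : ℝ} {f : X → ι}
    (hf : ∀ x y, ScaleAdj r x y → f x = f y) {i j : ι} (hij : i ≠ j) :
    ScaleDisjoint r (f ⁻¹' {i}) (f ⁻¹' {j}) := by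
  refine eq_empty_of_forall_notMem fun z hz => hij ?_
  obtain ⟨x, rfl, hx⟩ := (Metric.mem_thickening_iff_exists_edist_lt _ _).1 hz.1
  obtain ⟨y, rfl, hy⟩ := (Metric.mem_thickening_iff_exists_edist_lt _ _).1 hz.2
  exact hf x y ⟨z, hx, hy⟩

/-- Let `X` be an `∞`-pseudo-metric space such that for every `t > 0`, `X` is a finite union
of subsets of scale-`t`-dimension `0`. If `X` is of scale-`r`-dimension `0` for some `r > 0`,
then for each `s > 0` there exist finitely many subsets `X_0, …, X_p` covering `X` that are
pairwise scale-`r`-disjoint and each of scale-`s`-dimension `0`. -/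
theorem scale_disjoint_refinement {X : Type*} [PseudoEMetricSpace X]
    (hfin : ∀ t : ℝ, 0 < t → ∃ n : ℕ, ∃ F : Fin n → Set X,
      (⋃ i, F i) = univ ∧ ∀ i, ScaleDimZero t (F i))
    (r : ℝ) (hr : 0 < r) (hX : ScaleDimZero r (univ : Set X)) :
    ∀ s : ℝ, 0 < s →
      ∃ p : ℕ, ∃ F : Fin (p + 1) → Set X,
        (⋃ i, F i) = univ ∧
        (∀ i j, i ≠ j → ScaleDisjoint r (F i) (F j)) ∧
        (∀ i, ScaleDimZero s (F i)) := by
  obtain ⟨M, hM, hXM⟩ := hX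
  obtain ⟨o, ho, hadj⟩ := exists_scaleComponent_representative fun x => hXM x (mem_univ x)
  intro s hs
  have ht : 0 < M.toReal + (s + s) + M.toReal := by positivity
  obtain ⟨n, F, hF, hF0⟩ := hfin _ ht
  have hcover : ∀ x, ∃ i, x ∈ F i := fun x => mem_iUnion.1 (hF ▸ mem_univ x)
  choose a ha using hcover
  refine ⟨n, fun i => (fun x => (a (o x)).castSucc) ⁻¹' {i}, ?_, fun i j hij => ?_, fun i => ?_⟩
  · exact eq_univ_of_forall fun x => mem_iUnion.2 ⟨_, rfl⟩
  · exact scaleDisjoint_preimage_singleton (fun x y h => by rw [hadj x y h]) hij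
  · cases i using Fin.lastCases with
    | last => exact ⟨0, ENNReal.zero_ne_top, fun x hx => absurd hx (Fin.castSucc_ne_last _)⟩
    | cast i =>
      refine (hF0 i).of_mapsTo hM ho (fun x hx => ?_) ?_
      · have hi : a (o x) = i := Fin.castSucc_injective n hx
        exact hi ▸ ha (o x)
      · rw [ENNReal.ofReal_add (by positivity) (by positivity),
          ENNReal.ofReal_add (by positivity) (by positivity), ENNReal.ofReal_add hs.le hs.le,
          ENNReal.ofReal_toReal hM]
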